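/- arXiv:2209.04816 — 5 statements merged into one kernel-verified Lean document; each statement's English description precedes it below -/
import Mathlib

section
/- Let a, b, c, d ∈ ℂ with ad − bc ≠ 0, and let ξ(z) = (az + b)/(cz + d). Then ξ is a self-mapping of the open unit disk 𝔻 (i.e., cz + d ≠ 0 and |ξ(z)| < 1 for every z ∈ 𝔻) if and only if |b·conj(d) − a·conj(c)| + |ad − bc| ≤ |d|² − |c|². -/
open Complex ComplexConjugate

/-!
Let `ξ z = (a * z + b) / (c * z + d)`. If `‖c‖ < ‖d‖`, then with `Δ = ‖d‖ ^ 2 - ‖c‖ ^ 2` and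
`σ z = (conj d * z + conj c) / (c * z + d)`,
`ξ z = (b * conj d - a * conj c) / Δ + (a * d - b * c) / Δ * σ z`. Since `σ` maps the open unit ball
onto itself, `ξ` maps it onto the ball with centre `(b * conj d - a * conj c) / Δ` and radius
`‖a * d - b * c‖ / Δ`, which lies in the unit ball iff the norm of its centre plus its radius is at
most `1`. The pole of a nonconstant `ξ` bounded on the unit ball is neither inside the ball nor, by
continuity, on its boundary, so `‖c‖ < ‖d‖` is no restriction.
-/

open Metric Set

section Ball

variable {E : Type*} [NormedAddCommGroup E] [NormedSpace ℝ E] [Nontrivial E]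

lemma exists_norm_eq_and_sameRay (x : E) {r : ℝ} (hr : 0 ≤ r) :
    ∃ v : E, ‖v‖ = r ∧ SameRay ℝ x v := by
  rcases eq_or_ne x 0 with rfl | hx
  · obtain ⟨v, hv⟩ := exists_norm_eq E hr
    exact ⟨v, hv, SameRay.zero_left v⟩
  · refine ⟨(r * ‖x‖⁻¹) • x, ?_, SameRay.sameRay_nonneg_smul_right x (by positivity)⟩
    rw [norm_smul, Real.norm_of_nonneg (by positivity),
      inv_mul_cancel_right₀ (norm_ne_zero_iff.2 hx)]

lemma ball_subset_ball_iff_dist_add_le {x y : E} {r s : ℝ} (hr : 0 < r) :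
    ball x r ⊆ ball y s ↔ dist x y + r ≤ s := by
  refine ⟨fun hsub ↦ ?_, fun hle ↦ ball_subset_ball' (by linarith)⟩
  have hclosed : closedBall x r ⊆ closedBall y s := by
    rw [← closure_ball x hr.ne']
    exact (closure_mono hsub).trans closure_ball_subset_closedBall
  obtain ⟨v, hv, hray⟩ := exists_norm_eq_and_sameRay (x - y) hr.le
  have hfar : x + v ∈ closedBall y s := hclosed (by simp [hv])
  rwa [mem_closedBall, dist_eq_norm, add_sub_right_comm, hray.norm_add, hv,
    ← dist_eq_norm] at hfar

end Ball

lemma image_add_mul_unitBall {𝕜 : Type*} [NormedField 𝕜] {k : 𝕜} (hk : k ≠ 0) (p : 𝕜) :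
    (fun z ↦ p + k * z) '' ball 0 1 = ball p ‖k‖ := by
  rw [← image_image (fun z ↦ p + z) (fun z ↦ k * z)]
  simp only [← smul_eq_mul, ← vadd_eq_add, image_smul, image_vadd]
  rw [smul_unitBall hk, vadd_ball, vadd_eq_add, add_zero]

/-- The linear fractional transformation `z ↦ (a * z + b) / (c * z + d)` of a field; at a pole its
value is `0`, by the convention for division. -/
def moebius {K : Type*} [Field K] (a b c d z : K) : K := (a * z + b) / (c * z + d)

lemma moebius_moebius_adjugate {K : Type*} [Field K] {a b c d w : K} (h : a * d - b * c ≠ 0)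
    (hw : -c * w + a ≠ 0) : moebius a b c d (moebius d (-b) (-c) a w) = w := by
  have hnum : a * (d * w + -b) + b * (-c * w + a) = (a * d - b * c) * w := by ring
  have hden : c * (d * w + -b) + d * (-c * w + a) = a * d - b * c := by ring
  rw [moebius, moebius, mul_div_assoc', mul_div_assoc', div_add' _ _ _ hw, div_add' _ _ _ hw,
    div_div_div_cancel_right₀ hw, hnum, hden, mul_div_cancel_left₀ _ h]

lemma norm_sq_sub_norm_sq_pos {E : Type*} [SeminormedAddGroup E] {x y : E} (hxy : ‖x‖ < ‖y‖) :
    0 < ‖y‖ ^ 2 - ‖x‖ ^ 2 :=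
  sub_pos.2 (by gcongr)

variable {𝕜 : Type*} [RCLike 𝕜] {a b c d : 𝕜}

lemma conj_mul_self_sub_conj_mul_self (c d : 𝕜) :
    conj d * d - conj c * c = ((‖d‖ ^ 2 - ‖c‖ ^ 2 : ℝ) : 𝕜) := by
  push_cast
  rw [RCLike.conj_mul, RCLike.conj_mul]

lemma norm_mul_add_sq_sub_norm_conj_mul_add_conj_sq (c d z : 𝕜) :
    ‖c * z + d‖ ^ 2 - ‖conj d * z + conj c‖ ^ 2 = (‖d‖ ^ 2 - ‖c‖ ^ 2) * (1 - ‖z‖ ^ 2) := by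
  apply RCLike.ofReal_injective (K := 𝕜)
  push_cast
  simp only [← RCLike.mul_conj, map_add, map_mul, RCLike.conj_conj]
  ring

lemma norm_conj_mul_add_conj_lt (hcd : ‖c‖ < ‖d‖) {z : 𝕜} (hz : ‖z‖ < 1) :
    ‖conj d * z + conj c‖ < ‖c * z + d‖ := by
  have hprod : 0 < (‖d‖ ^ 2 - ‖c‖ ^ 2) * (1 - ‖z‖ ^ 2) :=
    mul_pos (norm_sq_sub_norm_sq_pos hcd) (by nlinarith [norm_nonneg z])
  rw [← norm_mul_add_sq_sub_norm_conj_mul_add_conj_sq] at hprod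
  exact lt_of_pow_lt_pow_left₀ 2 (norm_nonneg _) (sub_pos.1 hprod)

lemma mul_add_ne_zero_of_norm_lt (hcd : ‖c‖ < ‖d‖) {z : 𝕜} (hz : ‖z‖ < 1) : c * z + d ≠ 0 :=
  norm_pos_iff.1 ((norm_nonneg _).trans_lt (norm_conj_mul_add_conj_lt hcd hz))

lemma norm_moebius_conj_lt_one (hcd : ‖c‖ < ‖d‖) {z : 𝕜} (hz : ‖z‖ < 1) :
    ‖moebius (conj d) (conj c) c d z‖ < 1 := by
  rw [moebius, norm_div, div_lt_one (norm_pos_iff.2 (mul_add_ne_zero_of_norm_lt hcd hz))]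
  exact norm_conj_mul_add_conj_lt hcd hz

lemma image_moebius_conj_unitBall (hcd : ‖c‖ < ‖d‖) :
    moebius (conj d) (conj c) c d '' ball 0 1 = ball 0 1 := by
  refine Subset.antisymm ?_ fun w hw ↦ ?_
  · rintro _ ⟨z, hz, rfl⟩
    rw [mem_ball_zero_iff] at hz ⊢
    exact norm_moebius_conj_lt_one hcd hz
  · rw [mem_ball_zero_iff] at hw
    have hcd' : ‖-c‖ < ‖conj d‖ := by rwa [norm_neg, RCLike.norm_conj]
    have hdet : conj d * d - conj c * c ≠ 0 := by
      rw [conj_mul_self_sub_conj_mul_self]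
      exact_mod_cast (norm_sq_sub_norm_sq_pos hcd).ne'
    refine ⟨moebius d (-conj c) (-c) (conj d) w, ?_,
      moebius_moebius_adjugate hdet (mul_add_ne_zero_of_norm_lt hcd' hw)⟩
    simpa only [mem_ball_zero_iff, RCLike.conj_conj, map_neg]
      using norm_moebius_conj_lt_one hcd' hw

lemma moebius_eq_add_mul_moebius_conj (hcd : ‖c‖ < ‖d‖) {z : 𝕜} (hz : ‖z‖ < 1) :
    moebius a b c d z = (b * conj d - a * conj c) / (‖d‖ ^ 2 - ‖c‖ ^ 2 : ℝ) +
      (a * d - b * c) / (‖d‖ ^ 2 - ‖c‖ ^ 2 : ℝ) * moebius (conj d) (conj c) c d z := by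
  have hΔ : ((‖d‖ ^ 2 - ‖c‖ ^ 2 : ℝ) : 𝕜) ≠ 0 :=
    RCLike.ofReal_ne_zero.2 (norm_sq_sub_norm_sq_pos hcd).ne'
  have hden := mul_add_ne_zero_of_norm_lt hcd hz
  rw [← conj_mul_self_sub_conj_mul_self] at hΔ ⊢
  rw [moebius, moebius, div_mul_div_comm, div_add_div _ _ hΔ (mul_ne_zero hΔ hden),
    div_eq_div_iff hden (mul_ne_zero hΔ (mul_ne_zero hΔ hden))]
  ring

lemma image_moebius_unitBall (h : a * d - b * c ≠ 0) (hcd : ‖c‖ < ‖d‖) :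
    moebius a b c d '' ball 0 1 =
      ball ((b * conj d - a * conj c) / (‖d‖ ^ 2 - ‖c‖ ^ 2 : ℝ))
        (‖a * d - b * c‖ / (‖d‖ ^ 2 - ‖c‖ ^ 2)) := by
  have hΔ := norm_sq_sub_norm_sq_pos hcd
  have hradius : ‖(a * d - b * c) / (‖d‖ ^ 2 - ‖c‖ ^ 2 : ℝ)‖ =
      ‖a * d - b * c‖ / (‖d‖ ^ 2 - ‖c‖ ^ 2) := by
    rw [norm_div, RCLike.norm_ofReal, abs_of_pos hΔ]
  rw [image_congr fun z hz ↦ moebius_eq_add_mul_moebius_conj hcd (mem_ball_zero_iff.1 hz),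
    ← image_image (fun w ↦ _ + _ * w) (moebius (conj d) (conj c) c d),
    image_moebius_conj_unitBall hcd,
    image_add_mul_unitBall (div_ne_zero h (RCLike.ofReal_ne_zero.2 hΔ.ne')), hradius]

lemma mapsTo_moebius_unitBall_iff (h : a * d - b * c ≠ 0) (hcd : ‖c‖ < ‖d‖) {R : ℝ} :
    MapsTo (moebius a b c d) (ball 0 1) (ball 0 R) ↔
      ‖b * conj d - a * conj c‖ + ‖a * d - b * c‖ ≤ R * (‖d‖ ^ 2 - ‖c‖ ^ 2) := by
  have hΔ := norm_sq_sub_norm_sq_pos hcd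
  rw [mapsTo_iff_image_subset, image_moebius_unitBall h hcd,
    ball_subset_ball_iff_dist_add_le (div_pos (norm_pos_iff.2 h) hΔ), dist_zero_right, norm_div,
    RCLike.norm_ofReal, abs_of_pos hΔ, ← add_div, div_le_iff₀ hΔ]

lemma norm_lt_norm_of_norm_mul_add_le (h : a * d - b * c ≠ 0) {M : ℝ}
    (hM : ∀ z : 𝕜, ‖z‖ < 1 → ‖a * z + b‖ ≤ M * ‖c * z + d‖) : ‖c‖ < ‖d‖ := by
  have hM_closed : closedBall 0 1 ⊆ {z : 𝕜 | ‖a * z + b‖ ≤ M * ‖c * z + d‖} := by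
    rw [← closure_ball _ one_ne_zero]
    exact closure_minimal (fun z hz ↦ hM z (mem_ball_zero_iff.1 hz))
      (isClosed_le (by fun_prop) (by fun_prop))
  by_contra! hdc
  have hc : c ≠ 0 := by
    rintro rfl
    have hd : d = 0 := by simpa using hdc
    simp [hd] at h
  have hpole_mem : -d / c ∈ closedBall (0 : 𝕜) 1 := by
    rw [mem_closedBall_zero_iff, norm_div, norm_neg]
    exact div_le_one_of_le₀ hdc (norm_nonneg c)
  have hpole : c * (-d / c) + d = 0 := by rw [mul_div_cancel₀ _ hc, neg_add_cancel]
  have hle : ‖a * (-d / c) + b‖ ≤ M * ‖c * (-d / c) + d‖ := hM_closed hpole_mem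
  have hnum : a * (-d / c) + b = 0 := by
    rwa [hpole, norm_zero, mul_zero, norm_le_zero_iff] at hle
  exact h (by linear_combination a * hpole - c * hnum)

theorem stmt_1_general {𝕜 : Type*} [RCLike 𝕜] (a b c d : 𝕜) (h : a * d - b * c ≠ 0) :
    (∀ z : 𝕜, ‖z‖ < 1 → c * z + d ≠ 0 ∧ ‖(a * z + b) / (c * z + d)‖ < 1) ↔
      ‖b * conj d - a * conj c‖ + ‖a * d - b * c‖ ≤ ‖d‖ ^ 2 - ‖c‖ ^ 2 := by
  have hiff (hcd : ‖c‖ < ‖d‖) :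
      (∀ z : 𝕜, ‖z‖ < 1 → ‖(a * z + b) / (c * z + d)‖ < 1) ↔
        ‖b * conj d - a * conj c‖ + ‖a * d - b * c‖ ≤ ‖d‖ ^ 2 - ‖c‖ ^ 2 := by
    simpa only [MapsTo, mem_ball_zero_iff, moebius, one_mul]
      using mapsTo_moebius_unitBall_iff h hcd (R := 1)
  constructor
  · intro hself
    have hcd : ‖c‖ < ‖d‖ := norm_lt_norm_of_norm_mul_add_le h (M := 1) fun z hz ↦ by
      obtain ⟨hden, hlt⟩ := hself z hz
      rw [norm_div, div_lt_one (norm_pos_iff.2 hden)] at hlt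
      rw [one_mul]
      exact hlt.le
    exact (hiff hcd).1 fun z hz ↦ (hself z hz).2
  · intro hle
    have hΔ : 0 < ‖d‖ ^ 2 - ‖c‖ ^ 2 :=
      (add_pos_of_nonneg_of_pos (norm_nonneg _) (norm_pos_iff.2 h)).trans_le hle
    have hcd : ‖c‖ < ‖d‖ := lt_of_pow_lt_pow_left₀ 2 (norm_nonneg d) (sub_pos.1 hΔ)
    exact fun z hz ↦ ⟨mul_add_ne_zero_of_norm_lt hcd hz, (hiff hcd).2 hle z hz⟩

theorem stmt_1 (a b c d : ℂ) (h : a * d - b * c ≠ 0) :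
    (∀ z : ℂ, ‖z‖ < 1 → c * z + d ≠ 0 ∧ ‖(a * z + b) / (c * z + d)‖ < 1) ↔
      ‖b * conj d - a * conj c‖ + ‖a * d - b * c‖ ≤ ‖d‖ ^ 2 - ‖c‖ ^ 2 :=
  stmt_1_general a b c d h
end

section
/- Let ψ : 𝔻 → 𝔻 be an analytic function satisfying ψ'(u)·(1 − u·conj(ψ(z)))² = conj(ψ'(z))·(1 − ψ(u)·conj(z))² for all z, u ∈ 𝔻. Then there exist a ∈ 𝔻 and b ∈ ℝ with |a·(b − |a|² + 1)| + |b| ≤ 1 − |a|², such that ψ(z) = a + b·z/(1 − conj(a)·z) for all z ∈ 𝔻. -/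
open Complex ComplexConjugate

/-!
At `z = 0` the functional equation reads `ψ'(u) (1 - conj a * u)² = conj ψ'(0)` with `a = ψ(0)`;
taking `u = 0` as well shows that `b = ψ'(0)` is real. Integrating gives
`ψ(z) = a + b z / (1 - conj a * z)`. Composing `ψ` with the disc automorphism
`ζ ↦ (ζ + a) / (1 + conj a * ζ)` clears the denominator: the result is the affine function
`ζ ↦ (a (b - |a|² + 1) + b ζ) / (1 - |a|²)`. An affine function `A + B ζ` is bounded by `C` on the
disc only if `|A| + |B| ≤ C`, and this is the constraint on `a` and `b`.
-/

theorem one_sub_mul_ne_zero_of_norm_lt_one {K : Type*} [NormedDivisionRing K] {x y : K}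
    (hx : ‖x‖ < 1) (hy : ‖y‖ < 1) : 1 - x * y ≠ 0 := by
  have hxy : ‖x * y‖ < 1 := by
    rw [norm_mul]
    exact mul_lt_one_of_nonneg_of_lt_one_left (norm_nonneg x) hx hy.le
  intro h
  rw [← sub_eq_zero.mp h, norm_one] at hxy
  exact hxy.false

section Antiderivative

variable {𝕜 : Type*} [RCLike 𝕜]

theorem hasDerivAt_mul_div_one_sub_mul (b : 𝕜) {c z : 𝕜} (hz : 1 - c * z ≠ 0) :
    HasDerivAt (fun w => b * w / (1 - c * w)) (b / (1 - c * z) ^ 2) z := by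
  have hnum : HasDerivAt (fun w => b * w) b z := by
    simpa using (hasDerivAt_id z).const_mul b
  have hden : HasDerivAt (fun w => 1 - c * w) (-c) z := by
    simpa using ((hasDerivAt_id z).const_mul c).const_sub 1
  refine (hnum.div hden hz).congr_deriv ?_
  congr 1
  ring

theorem eqOn_add_mul_div_one_sub_mul_of_deriv_eq {s : Set 𝕜} (hs : IsOpen s)
    (hs' : IsPreconnected s) (h0 : 0 ∈ s) {f : 𝕜 → 𝕜} (hf : DifferentiableOn 𝕜 f s) {b c : 𝕜}
    (hc : ∀ z ∈ s, 1 - c * z ≠ 0) (hderiv : ∀ z ∈ s, deriv f z = b / (1 - c * z) ^ 2) :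
    s.EqOn f fun z => f 0 + b * z / (1 - c * z) := by
  have hasDerivAt_rhs : ∀ z ∈ s,
      HasDerivAt (fun w => f 0 + b * w / (1 - c * w)) (b / (1 - c * z) ^ 2) z :=
    fun z hz => (hasDerivAt_mul_div_one_sub_mul b (hc z hz)).const_add (f 0)
  exact hs.eqOn_of_deriv_eq hs' hf
    (fun z hz => (hasDerivAt_rhs z hz).differentiableAt.differentiableWithinAt)
    (fun z hz => (hderiv z hz).trans (hasDerivAt_rhs z hz).deriv.symm) h0 (by simp)

end Antiderivative

theorem norm_add_norm_le_of_forall_norm_add_mul_le {𝕜 : Type*} [RCLike 𝕜] {A B : 𝕜} {C : ℝ}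
    (h : ∀ ζ ∈ Metric.ball (0 : 𝕜) 1, ‖A + B * ζ‖ ≤ C) : ‖A‖ + ‖B‖ ≤ C := by
  have h_closedBall : ∀ ζ ∈ Metric.closedBall (0 : 𝕜) 1, ‖A + B * ζ‖ ≤ C := by
    rw [← closure_ball (0 : 𝕜) one_ne_zero]
    exact fun ζ hζ => le_on_closure h (by fun_prop) continuousOn_const hζ
  obtain ⟨u, hu, hAu⟩ := RCLike.exists_norm_mul_eq_self A
  obtain ⟨v, hv, hBv⟩ := RCLike.exists_norm_eq_mul_self B
  have h_aligned : A + B * (u * v) = u * ((‖A‖ + ‖B‖ : ℝ) : 𝕜) := by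
    push_cast
    linear_combination -hAu - u * hBv
  calc ‖A‖ + ‖B‖ = ‖A + B * (u * v)‖ := by
        rw [h_aligned, norm_mul, hu, one_mul, RCLike.norm_of_nonneg (by positivity)]
    _ ≤ C := h_closedBall _ (by simp [hu, hv])

section DiscAutomorphism

variable {𝕜 : Type*} [RCLike 𝕜] {a ζ : 𝕜}

/-- The automorphism of the unit disc that sends `0` to `a`, for `‖a‖ < 1`; it is defined by its
formula on all of `𝕜`, with value `0` where the denominator vanishes. -/
noncomputable def discAut (a ζ : 𝕜) : 𝕜 := (ζ + a) / (1 + conj a * ζ)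

theorem one_add_conj_mul_ne_zero (ha : ‖a‖ < 1) (hζ : ‖ζ‖ < 1) : 1 + conj a * ζ ≠ 0 := by
  have h : ‖-conj a‖ < 1 := by simpa using ha
  simpa using one_sub_mul_ne_zero_of_norm_lt_one h hζ

theorem norm_one_add_conj_mul_sq_sub_norm_add_sq (a ζ : 𝕜) :
    ‖1 + conj a * ζ‖ ^ 2 - ‖ζ + a‖ ^ 2 = (1 - ‖a‖ ^ 2) * (1 - ‖ζ‖ ^ 2) := by
  apply RCLike.ofReal_injective (K := 𝕜)
  push_cast
  simp only [← RCLike.mul_conj, map_add, map_mul, map_one, RCLike.conj_conj]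
  ring

theorem norm_discAut_lt_one (ha : ‖a‖ < 1) (hζ : ‖ζ‖ < 1) : ‖discAut a ζ‖ < 1 := by
  have h_pos : 0 < (1 - ‖a‖ ^ 2) * (1 - ‖ζ‖ ^ 2) :=
    mul_pos (sub_pos.mpr (pow_lt_one₀ (norm_nonneg a) ha two_ne_zero))
      (sub_pos.mpr (pow_lt_one₀ (norm_nonneg ζ) hζ two_ne_zero))
  rw [← norm_one_add_conj_mul_sq_sub_norm_add_sq, sub_pos] at h_pos
  rw [discAut, norm_div, div_lt_one (norm_pos_iff.mpr (one_add_conj_mul_ne_zero ha hζ))]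
  exact lt_of_pow_lt_pow_left₀ 2 (norm_nonneg _) h_pos

theorem one_sub_conj_mul_discAut (h : 1 + conj a * ζ ≠ 0) :
    1 - conj a * discAut a ζ = (1 - (‖a‖ : 𝕜) ^ 2) / (1 + conj a * ζ) := by
  rw [discAut, ← RCLike.conj_mul]
  field_simp
  ring

theorem add_mul_discAut_div_one_sub_conj_mul_discAut (b : 𝕜) (ha : ‖a‖ < 1) (hζ : ‖ζ‖ < 1) :
    a + b * discAut a ζ / (1 - conj a * discAut a ζ) =
      (a * (b - (‖a‖ : 𝕜) ^ 2 + 1) + b * ζ) / (1 - (‖a‖ : 𝕜) ^ 2) := by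
  have h_den := one_add_conj_mul_ne_zero ha hζ
  have h_ne : (1 : 𝕜) - (‖a‖ : 𝕜) ^ 2 ≠ 0 := by
    exact_mod_cast (sub_pos.mpr (pow_lt_one₀ (norm_nonneg a) ha two_ne_zero)).ne'
  rw [one_sub_conj_mul_discAut h_den, discAut, mul_div_assoc, div_div_div_cancel_right₀ h_den]
  field_simp
  ring

theorem norm_mul_add_norm_le_of_mapsTo_ball {b : 𝕜} (ha : ‖a‖ < 1)
    (h : Set.MapsTo (fun z => a + b * z / (1 - conj a * z))
      (Metric.ball 0 1) (Metric.ball 0 1)) :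
    ‖a * (b - (‖a‖ : 𝕜) ^ 2 + 1)‖ + ‖b‖ ≤ 1 - ‖a‖ ^ 2 := by
  have h_pos : 0 < 1 - ‖a‖ ^ 2 := sub_pos.mpr (pow_lt_one₀ (norm_nonneg a) ha two_ne_zero)
  have h_norm : ‖(1 : 𝕜) - (‖a‖ : 𝕜) ^ 2‖ = 1 - ‖a‖ ^ 2 := by
    simpa using RCLike.norm_of_nonneg (K := 𝕜) h_pos.le
  refine norm_add_norm_le_of_forall_norm_add_mul_le fun ζ hζ => ?_
  rw [mem_ball_zero_iff] at hζ
  have h_lt : ‖a + b * discAut a ζ / (1 - conj a * discAut a ζ)‖ < 1 :=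
    mem_ball_zero_iff.mp (h (mem_ball_zero_iff.mpr (norm_discAut_lt_one ha hζ)))
  rw [add_mul_discAut_div_one_sub_conj_mul_discAut b ha hζ, norm_div, h_norm,
    div_lt_one h_pos] at h_lt
  exact h_lt.le

end DiscAutomorphism

theorem stmt_3_general {𝕜 : Type*} [RCLike 𝕜] {ψ : 𝕜 → 𝕜}
    (hψ : DifferentiableOn 𝕜 ψ (Metric.ball 0 1))
    (hmap : Set.MapsTo ψ (Metric.ball 0 1) (Metric.ball 0 1))
    (heq : ∀ u ∈ Metric.ball (0 : 𝕜) 1,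
      deriv ψ u * (1 - u * conj (ψ 0)) ^ 2 = conj (deriv ψ 0)) :
    ∃ (a : 𝕜) (b : ℝ), ‖a‖ < 1 ∧
      ‖a * ((b : 𝕜) - (‖a‖ : 𝕜) ^ 2 + 1)‖ + |b| ≤ 1 - ‖a‖ ^ 2 ∧
      ∀ z ∈ Metric.ball (0 : 𝕜) 1, ψ z = a + (b : 𝕜) * z / (1 - conj a * z) := by
  have h0 : (0 : 𝕜) ∈ Metric.ball (0 : 𝕜) 1 := Metric.mem_ball_self one_pos
  have ha : ‖ψ 0‖ < 1 := mem_ball_zero_iff.mp (hmap h0)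
  obtain ⟨b, hb⟩ : ∃ b : ℝ, deriv ψ 0 = b :=
    RCLike.conj_eq_iff_real.mp (by simpa using (heq 0 h0).symm)
  have h_ne : ∀ z ∈ Metric.ball (0 : 𝕜) 1, 1 - conj (ψ 0) * z ≠ 0 := fun z hz =>
    one_sub_mul_ne_zero_of_norm_lt_one (by simpa using ha) (mem_ball_zero_iff.mp hz)
  have h_deriv : ∀ z ∈ Metric.ball (0 : 𝕜) 1,
      deriv ψ z = b / (1 - conj (ψ 0) * z) ^ 2 := fun z hz => by
    rw [eq_div_iff (pow_ne_zero 2 (h_ne z hz)), mul_comm (conj _) z, heq z hz, hb,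
      RCLike.conj_ofReal]
  have h_formula := eqOn_add_mul_div_one_sub_mul_of_deriv_eq Metric.isOpen_ball
    (convex_ball (0 : 𝕜) 1).isPreconnected h0 hψ h_ne h_deriv
  refine ⟨ψ 0, b, ha, ?_, h_formula⟩
  simpa only [RCLike.norm_ofReal] using
    norm_mul_add_norm_le_of_mapsTo_ball ha (hmap.congr h_formula)

theorem stmt_3 (ψ : ℂ → ℂ)
    (hψ : AnalyticOnNhd ℂ ψ (Metric.ball 0 1))
    (hmap : ∀ z ∈ Metric.ball (0 : ℂ) 1, ψ z ∈ Metric.ball (0 : ℂ) 1)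
    (heq : ∀ z ∈ Metric.ball (0 : ℂ) 1, ∀ u ∈ Metric.ball (0 : ℂ) 1,
      deriv ψ u * (1 - u * conj (ψ z)) ^ 2 =
        conj (deriv ψ z) * (1 - ψ u * conj z) ^ 2) :
    ∃ (a : ℂ) (b : ℝ), ‖a‖ < 1 ∧
      ‖a * ((b : ℂ) - (‖a‖ : ℂ) ^ 2 + 1)‖ + |b| ≤ 1 - ‖a‖ ^ 2 ∧
      ∀ z ∈ Metric.ball (0 : ℂ) 1, ψ z = a + (b : ℂ) * z / (1 - conj a * z) :=
  stmt_3_general hψ.differentiableOn hmap fun u hu => by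
    simpa using heq 0 (Metric.mem_ball_self one_pos) u hu
end

section
/- Let θ ∈ 𝕋 and let ψ : 𝔻 → 𝔻 be an analytic function satisfying ψ'(y)·(1 − θ·y·ψ(x))² = ψ'(x)·(1 − θ·ψ(y)·x)² for all x, y ∈ 𝔻. Then there exist α₀, α₁ ∈ ℂ with |α₀ + conj(α₀)·(α₁ − α₀²)| + |α₁| ≤ 1 − |α₀|², such that ψ(z) = α₀ + α₁·θ·z/(1 − α₀·θ·z) for all z ∈ 𝔻. -/
open Complex ComplexConjugate

/-!
Setting `x = 0` in the functional equation already gives the differential equation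
`ψ'(y) (1 - θ ψ(0) y)² = ψ'(0)`, which integrates to a linear fractional `ψ` with `α₀ = ψ(0)` and
`α₁ = ψ'(0) / θ`. Write `w = θ z` and substitute `w = (u + conj α₀) / (1 + α₀ u)`, an automorphism
of the disk. This turns `ψ` into the affine map `u ↦ (C + α₁ u) / (1 - |α₀|²)` with
`C = α₀ + conj α₀ (α₁ - α₀²)`, whose values on the disk have norms with supremum
`(|C| + |α₁|) / (1 - |α₀|²)`; this supremum is at most `1` because `ψ` maps the disk to itself.
-/

open Metric

theorem hasDerivAt_div_one_sub_mul {𝕜 : Type*} [NontriviallyNormedField 𝕜] {m z : 𝕜}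
    (hz : 1 - m * z ≠ 0) : HasDerivAt (fun w ↦ w / (1 - m * w)) (1 / (1 - m * z) ^ 2) z := by
  have hden : HasDerivAt (fun w ↦ 1 - m * w) (-m) z := by
    simpa using ((hasDerivAt_id z).const_mul m).const_sub 1
  exact ((hasDerivAt_id z).fun_div hden hz).congr_deriv (by simp only [id]; ring)

section RCLike

variable {𝕜 : Type*} [RCLike 𝕜]

theorem eqOn_add_mul_div_of_deriv_mul_sq_eq {U : Set 𝕜} (hU : IsOpen U) (hU' : IsPreconnected U)
    (h0 : 0 ∈ U) {f : 𝕜 → 𝕜} (hf : DifferentiableOn 𝕜 f U) {c m : 𝕜}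
    (hm : ∀ z ∈ U, 1 - m * z ≠ 0) (hode : ∀ z ∈ U, deriv f z * (1 - m * z) ^ 2 = c) :
    U.EqOn f fun z ↦ f 0 + c * (z / (1 - m * z)) := by
  have hg : ∀ z ∈ U, HasDerivAt (fun z ↦ f 0 + c * (z / (1 - m * z)))
      (c * (1 / (1 - m * z) ^ 2)) z := fun z hz ↦
    ((hasDerivAt_div_one_sub_mul (hm z hz)).const_mul c).const_add (f 0)
  refine hU.eqOn_of_deriv_eq hU' hf
    (fun z hz ↦ (hg z hz).differentiableAt.differentiableWithinAt) (fun z hz ↦ ?_) h0 (by simp)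
  rw [(hg z hz).deriv, mul_one_div, eq_div_iff (pow_ne_zero 2 (hm z hz)), hode z hz]

theorem norm_one_add_mul_sq_sub_norm_add_conj_sq (a u : 𝕜) :
    ‖1 + a * u‖ ^ 2 - ‖u + conj a‖ ^ 2 = (1 - ‖a‖ ^ 2) * (1 - ‖u‖ ^ 2) := by
  apply RCLike.ofReal_injective (K := 𝕜)
  push_cast
  simp only [← RCLike.mul_conj, map_add, map_mul, map_one, RCLike.conj_conj]
  ring

theorem one_add_mul_ne_zero_of_norm_lt_one {a u : 𝕜} (ha : ‖a‖ < 1) (hu : ‖u‖ < 1) :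
    1 + a * u ≠ 0 := by
  have hau : ‖-(a * u)‖ < 1 := by
    rw [norm_neg, norm_mul]
    exact mul_lt_one_of_nonneg_of_lt_one_left (norm_nonneg a) ha hu.le
  simpa using (isUnit_one_sub_of_norm_lt_one hau).ne_zero

theorem norm_add_conj_div_one_add_mul_lt_one {a u : 𝕜} (ha : ‖a‖ < 1) (hu : ‖u‖ < 1) :
    ‖(u + conj a) / (1 + a * u)‖ < 1 := by
  have hpos : 0 < (1 - ‖a‖ ^ 2) * (1 - ‖u‖ ^ 2) :=
    mul_pos (sub_pos.2 (pow_lt_one₀ (norm_nonneg a) ha two_ne_zero))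
      (sub_pos.2 (pow_lt_one₀ (norm_nonneg u) hu two_ne_zero))
  rw [← norm_one_add_mul_sq_sub_norm_add_conj_sq, sub_pos] at hpos
  rw [norm_div, div_lt_one (norm_pos_iff.2 (one_add_mul_ne_zero_of_norm_lt_one ha hu))]
  exact lt_of_pow_lt_pow_left₀ 2 (norm_nonneg _) hpos

theorem add_mul_div_one_sub_mul_comp_mobius {a b u : 𝕜} (ha : ‖a‖ < 1) (hu : ‖u‖ < 1) :
    a + b * ((u + conj a) / (1 + a * u)) / (1 - a * ((u + conj a) / (1 + a * u))) =
      (a + conj a * (b - a ^ 2) + b * u) / (1 - a * conj a) := by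
  have hau : 1 + a * u ≠ 0 := one_add_mul_ne_zero_of_norm_lt_one ha hu
  have haa : 1 - a * conj a ≠ 0 := by
    simpa [sub_eq_add_neg] using
      one_add_mul_ne_zero_of_norm_lt_one ha (u := -conj a) (by simpa using ha)
  have hden : 1 - a * ((u + conj a) / (1 + a * u)) = (1 - a * conj a) / (1 + a * u) := by
    field_simp
    ring
  rw [hden]
  field_simp
  ring

theorem exists_norm_eq_one_norm_add_mul_eq (c b : 𝕜) :
    ∃ u : 𝕜, ‖u‖ = 1 ∧ ‖c + b * u‖ = ‖c‖ + ‖b‖ := by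
  obtain ⟨e, he, hc⟩ := RCLike.exists_norm_mul_eq_self c
  obtain ⟨f, hf, hb⟩ := RCLike.exists_norm_eq_mul_self b
  refine ⟨f * e, by simp [he, hf], ?_⟩
  have hfactor : c + b * (f * e) = e * ((‖c‖ + ‖b‖ : ℝ) : 𝕜) := by
    push_cast
    linear_combination -hc - e * hb
  rw [hfactor, norm_mul, he, one_mul, RCLike.norm_of_nonneg (by positivity)]

theorem norm_add_norm_le_of_forall_mem_ball {c b : 𝕜} {r : ℝ}
    (h : ∀ u ∈ ball (0 : 𝕜) 1, ‖c + b * u‖ ≤ r) : ‖c‖ + ‖b‖ ≤ r := by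
  obtain ⟨u, hu, hcu⟩ := exists_norm_eq_one_norm_add_mul_eq c b
  let : NormedSpace ℝ 𝕜 := NormedSpace.restrictScalars ℝ 𝕜 𝕜
  have hmem : u ∈ closure (ball (0 : 𝕜) 1) := by
    rw [closure_ball 0 one_ne_zero, mem_closedBall_zero_iff, hu]
  rw [← hcu]
  exact le_on_closure h (by fun_prop) (by fun_prop) hmem

theorem norm_add_conj_mul_add_norm_le_of_forall_mem_ball {a b : 𝕜} (ha : ‖a‖ < 1)
    (h : ∀ z ∈ ball (0 : 𝕜) 1, ‖a + b * z / (1 - a * z)‖ ≤ 1) :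
    ‖a + conj a * (b - a ^ 2)‖ + ‖b‖ ≤ 1 - ‖a‖ ^ 2 := by
  have hpos : 0 < 1 - ‖a‖ ^ 2 := sub_pos.2 (pow_lt_one₀ (norm_nonneg a) ha two_ne_zero)
  have hnorm : ‖1 - a * conj a‖ = 1 - ‖a‖ ^ 2 := by
    rw [RCLike.mul_conj, ← RCLike.norm_of_nonneg (K := 𝕜) hpos.le]
    push_cast
    rfl
  refine norm_add_norm_le_of_forall_mem_ball fun u hu ↦ ?_
  rw [mem_ball_zero_iff] at hu
  have hle := h _ (mem_ball_zero_iff.2 (norm_add_conj_div_one_add_mul_lt_one ha hu))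
  rwa [add_mul_div_one_sub_mul_comp_mobius ha hu, norm_div, hnorm, div_le_one hpos] at hle

end RCLike

theorem stmt_4_general {θ : ℂ} (hθ : 1 ≤ ‖θ‖) {ψ : ℂ → ℂ}
    (hψ : DifferentiableOn ℂ ψ (ball 0 1)) (hmap : Set.MapsTo ψ (ball 0 1) (ball 0 1))
    (hpole : ‖ψ 0 * θ‖ ≤ 1)
    (hode : ∀ y ∈ ball (0 : ℂ) 1, deriv ψ y * (1 - θ * y * ψ 0) ^ 2 = deriv ψ 0) :
    ∃ α₀ α₁ : ℂ,
      ‖α₀ + conj α₀ * (α₁ - α₀ ^ 2)‖ + ‖α₁‖ ≤ 1 - ‖α₀‖ ^ 2 ∧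
      ∀ z ∈ ball (0 : ℂ) 1, ψ z = α₀ + α₁ * θ * z / (1 - α₀ * θ * z) := by
  have hθ₀ : θ ≠ 0 := norm_pos_iff.1 (one_pos.trans_le hθ)
  have h0 : (0 : ℂ) ∈ ball 0 1 := mem_ball_self one_pos
  have hden : ∀ z ∈ ball (0 : ℂ) 1, 1 - ψ 0 * θ * z ≠ 0 := fun z hz ↦ by
    refine (isUnit_one_sub_of_norm_lt_one ?_).ne_zero
    rw [norm_mul]
    exact mul_lt_one_of_nonneg_of_lt_one_right hpole (norm_nonneg z) (mem_ball_zero_iff.1 hz)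
  have hform : ∀ z ∈ ball (0 : ℂ) 1,
      ψ z = ψ 0 + deriv ψ 0 / θ * θ * z / (1 - ψ 0 * θ * z) := fun z hz ↦ by
    rw [div_mul_cancel₀ _ hθ₀, mul_div_assoc]
    exact eqOn_add_mul_div_of_deriv_mul_sq_eq isOpen_ball (convex_ball 0 1).isPreconnected h0 hψ
      hden (fun y hy ↦ by rw [← hode y hy]; ring) hz
  refine ⟨ψ 0, deriv ψ 0 / θ,
    norm_add_conj_mul_add_norm_le_of_forall_mem_ball (mem_ball_zero_iff.1 (hmap h0))
      fun w hw ↦ ?_, hform⟩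
  have hwθ : w / θ ∈ ball (0 : ℂ) 1 := by
    rw [mem_ball_zero_iff] at hw ⊢
    rw [norm_div]
    exact (div_le_self (norm_nonneg w) hθ).trans_lt hw
  have hlt := mem_ball_zero_iff.1 (hmap hwθ)
  rw [hform _ hwθ, mul_assoc _ θ, mul_assoc _ θ, mul_div_cancel₀ w hθ₀] at hlt
  exact hlt.le

theorem stmt_4 (θ : ℂ) (hθ : ‖θ‖ = 1) (ψ : ℂ → ℂ)
    (hψ : AnalyticOnNhd ℂ ψ (Metric.ball 0 1))
    (hmap : ∀ z ∈ Metric.ball (0 : ℂ) 1, ψ z ∈ Metric.ball (0 : ℂ) 1)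
    (heq : ∀ x ∈ Metric.ball (0 : ℂ) 1, ∀ y ∈ Metric.ball (0 : ℂ) 1,
      deriv ψ y * (1 - θ * y * ψ x) ^ 2 = deriv ψ x * (1 - θ * ψ y * x) ^ 2) :
    ∃ α₀ α₁ : ℂ,
      ‖α₀ + conj α₀ * (α₁ - α₀ ^ 2)‖ + ‖α₁‖ ≤ 1 - ‖α₀‖ ^ 2 ∧
      ∀ z ∈ Metric.ball (0 : ℂ) 1, ψ z = α₀ + α₁ * θ * z / (1 - α₀ * θ * z) := by
  have h0 : (0 : ℂ) ∈ ball 0 1 := mem_ball_self one_pos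
  exact stmt_4_general hθ.ge hψ.differentiableOn hmap
    (by simpa [hθ] using (mem_ball_zero_iff.1 (hmap 0 h0)).le)
    fun y hy ↦ by simpa using heq 0 h0 y hy
end

section
/- Let d ≥ 1, ℓ ∈ ℤ_{≥0}^d, and let {U₁, U₂} be a partition of {1,…,d}. Let p_j ∈ 𝔻 \ {0} for j ∈ U₁ and q_j ∈ 𝕋 for j ∈ U₂, and define ω = (ω₁,…,ω_d) : 𝔻^d → 𝔻^d by ω_j(z) = (conj(p_j)/p_j)·(p_j − z_j)/(1 − conj(p_j)·z_j) if j ∈ U₁ and ω_j(z) = q_j·z_j if j ∈ U₂, and define ϑ(z) = ∏_{j∈U₁} (1 − |p_j|²)^{1+ℓ_j/2}/(1 − conj(p_j)·z_j)^{ℓ_j+2}. Then for every analytic function h : 𝔻^d → ℂ, ∫_{𝔻^d} |ϑ(z)|²·|h(conj(ω(z)))|² ∏_{j=1}^d (1+ℓ_j)(1−|z_j|²)^{ℓ_j} dA(z₁)⋯dA(z_d) = ∫_{𝔻^d} |h(x)|² ∏_{j=1}^d (1+ℓ_j)(1−|x_j|²)^{ℓ_j} dA(x₁)⋯dA(x_d)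 (as an equality in [0,∞]). -/
open MeasureTheory Complex ComplexConjugate

/-- The normalized area measure on `ℂ` (planar Lebesgue measure divided by `π`). -/
noncomputable def dA : Measure ℂ := (ENNReal.ofReal Real.pi)⁻¹ • volume

/-!
Each coordinate of `ω` is a disk automorphism `ψ z = c (p - z) / (1 - conj p * z)` with `|c| = 1`
and `|p| < 1`, the rotation by `q` being the case `c = -q`, `p = 0`. Equality in the Schwarz–Pick
lemma, `1 - |ψ z|² = |ψ' z| (1 - |z|²)`, turns the weight `(1 - |ψ z|²) ^ ℓ` into
`|ψ' z| ^ ℓ (1 - |z|²) ^ ℓ`, while the real Jacobian of `ψ` is `|ψ'|²`. Since `|ϑ|²` is the product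
of the factors `|ψ_j'| ^ (ℓ_j + 2)`, the substitution `w = ω z` followed by the measure-preserving
reflection `x = conj w` gives the identity.
-/

open Metric Set
open scoped ENNReal

section ChangeOfVariables

theorem abs_det_restrictScalars_toSpanSingleton (a : ℂ) :
    |((ContinuousLinearMap.toSpanSingleton ℂ a).restrictScalars ℝ).det| = ‖a‖ ^ 2 := by
  simp [ContinuousLinearMap.det, LinearMap.det_restrictScalars, Algebra.norm_complex_eq,
    normSq_eq_norm_sq]

theorem lintegral_image_piMap_eq_lintegral_prod_sq_norm_deriv_mul {ι : Type*} [Fintype ι]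
    {μ : Measure (ι → ℂ)} [μ.IsAddHaarMeasure] {s : Set (ι → ℂ)} (hs : MeasurableSet s)
    {f f' : ι → ℂ → ℂ} (hf' : ∀ z ∈ s, ∀ j, HasDerivAt (f j) (f' j (z j)) (z j))
    (hf : InjOn (Pi.map f) s) (g : (ι → ℂ) → ℝ≥0∞) :
    ∫⁻ w in Pi.map f '' s, g w ∂μ =
      ∫⁻ z in s, ENNReal.ofReal (∏ j, ‖f' j (z j)‖ ^ 2) * g (Pi.map f z) ∂μ := by
  let L (z : ι → ℂ) (j : ι) : ℂ →L[ℝ] ℂ :=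
    (ContinuousLinearMap.toSpanSingleton ℂ (f' j (z j))).restrictScalars ℝ
  have hL : ∀ z ∈ s, HasFDerivWithinAt (Pi.map f)
      (ContinuousLinearMap.pi fun j ↦ (L z j).comp (ContinuousLinearMap.proj j)) s z := by
    refine fun z hz ↦ (hasFDerivAt_pi.mpr fun j ↦ ?_).hasFDerivWithinAt
    exact ((hf' z hz j).hasFDerivAt.restrictScalars ℝ).comp z (hasFDerivAt_apply j z)
  rw [lintegral_image_eq_lintegral_abs_det_fderiv_mul μ hs hL hf]
  simp only [L, ContinuousLinearMap.det_pi, Finset.abs_prod,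
    abs_det_restrictScalars_toSpanSingleton]

end ChangeOfVariables

section DiskAut

/-- The automorphism `z ↦ c (p - z) / (1 - conj p * z)` of the open unit disk, for `‖c‖ = 1` and
`‖p‖ < 1`; every automorphism of the disk is of this form. -/
noncomputable def diskAut (c p z : ℂ) : ℂ := c * ((p - z) / (1 - conj p * z))

variable {c p z : ℂ}

theorem diskAut_neg_zero (c z : ℂ) : diskAut (-c) 0 z = c * z := by
  simp [diskAut]

theorem one_sub_conj_mul_ne_zero (hp : ‖p‖ < 1) (hz : ‖z‖ < 1) : 1 - conj p * z ≠ 0 := by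
  have hlt : ‖conj p * z‖ < 1 := by
    rw [norm_mul, RCLike.norm_conj]
    exact mul_lt_one_of_nonneg_of_lt_one_left (norm_nonneg p) hp hz.le
  refine sub_ne_zero.mpr fun h ↦ hlt.ne ?_
  rw [← h, norm_one]

theorem one_sub_sq_norm_pos (hz : ‖z‖ < 1) : 0 < 1 - ‖z‖ ^ 2 :=
  sub_pos.mpr (pow_lt_one₀ (norm_nonneg z) hz two_ne_zero)

theorem sq_norm_one_sub_conj_mul_sub_sq_norm_sub (p z : ℂ) :
    ‖1 - conj p * z‖ ^ 2 - ‖p - z‖ ^ 2 = (1 - ‖p‖ ^ 2) * (1 - ‖z‖ ^ 2) := by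
  simp only [← normSq_eq_norm_sq, normSq_apply, sub_re, sub_im, mul_re, mul_im, conj_re, conj_im,
    one_re, one_im]
  ring

theorem hasDerivAt_diskAut (c : ℂ) (h : 1 - conj p * z ≠ 0) :
    HasDerivAt (diskAut c p) (-(c * (1 - ‖p‖ ^ 2 : ℝ)) / (1 - conj p * z) ^ 2) z := by
  have hnum : HasDerivAt (fun z ↦ p - z) (-1) z := by
    simpa using (hasDerivAt_id z).const_sub p
  have hden : HasDerivAt (fun z ↦ 1 - conj p * z) (-conj p) z := by
    simpa using ((hasDerivAt_id z).const_mul (conj p)).const_sub 1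
  refine ((hnum.div hden h).const_mul c).congr_deriv ?_
  push_cast
  rw [← conj_mul']
  ring

theorem norm_deriv_diskAut (hc : ‖c‖ = 1) (hp : ‖p‖ < 1) (hz : ‖z‖ < 1) :
    ‖deriv (diskAut c p) z‖ = (1 - ‖p‖ ^ 2) / ‖1 - conj p * z‖ ^ 2 := by
  rw [(hasDerivAt_diskAut c (one_sub_conj_mul_ne_zero hp hz)).deriv, norm_div, norm_neg, norm_mul,
    hc, one_mul, norm_real, Real.norm_of_nonneg (one_sub_sq_norm_pos hp).le, norm_pow]

theorem one_sub_sq_norm_diskAut (hc : ‖c‖ = 1) (hp : ‖p‖ < 1) (hz : ‖z‖ < 1) :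
    1 - ‖diskAut c p z‖ ^ 2 = ‖deriv (diskAut c p) z‖ * (1 - ‖z‖ ^ 2) := by
  have hne : ‖1 - conj p * z‖ ^ 2 ≠ 0 :=
    pow_ne_zero 2 (norm_ne_zero_iff.mpr (one_sub_conj_mul_ne_zero hp hz))
  rw [norm_deriv_diskAut hc hp hz, div_mul_eq_mul_div,
    ← sq_norm_one_sub_conj_mul_sub_sq_norm_sub, sub_div, div_self hne, diskAut, norm_mul, hc,
    one_mul, norm_div, div_pow]

theorem norm_diskAut_lt_one (hc : ‖c‖ = 1) (hp : ‖p‖ < 1) (hz : ‖z‖ < 1) :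
    ‖diskAut c p z‖ < 1 := by
  have hpos : 0 < 1 - ‖diskAut c p z‖ ^ 2 := by
    rw [one_sub_sq_norm_diskAut hc hp hz, norm_deriv_diskAut hc hp hz]
    have := one_sub_conj_mul_ne_zero hp hz
    have := one_sub_sq_norm_pos hp
    have := one_sub_sq_norm_pos hz
    positivity
  exact (sq_lt_one_iff₀ (norm_nonneg _)).mp (sub_pos.mp hpos)

theorem diskAut_inv_mul_diskAut (hc : ‖c‖ = 1) (hp : ‖p‖ < 1) (hz : ‖z‖ < 1) :
    diskAut c⁻¹ (c * p) (diskAut c p z) = z := by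
  have hc0 : c ≠ 0 := norm_ne_zero_iff.mp (by simp [hc])
  have hconj : conj c * c = 1 := by simp [conj_mul', hc]
  have hz0 := one_sub_conj_mul_ne_zero hp hz
  have hp0 := one_sub_conj_mul_ne_zero hp hp
  have hnum : c * p - diskAut c p z = c * (z * (1 - conj p * p) / (1 - conj p * z)) := by
    rw [diskAut, ← mul_sub, sub_div' hz0]
    ring
  have hden : 1 - conj (c * p) * diskAut c p z = (1 - conj p * p) / (1 - conj p * z) := by
    rw [diskAut, map_mul, mul_mul_mul_comm, hconj, one_mul, mul_div_assoc', one_sub_div hz0]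
    ring
  rw [diskAut, hnum, hden, mul_div_assoc, inv_mul_cancel_left₀ hc0, div_div_div_cancel_right₀ hz0,
    mul_div_cancel_right₀ _ hp0]

theorem sq_norm_rpow_div_pow_eq_norm_deriv_diskAut_pow (hc : ‖c‖ = 1) (hp : ‖p‖ < 1)
    (hz : ‖z‖ < 1) (n : ℕ) :
    ‖(((1 - ‖p‖ ^ 2) ^ ((1 : ℝ) + (n : ℝ) / 2) : ℝ) : ℂ) / (1 - conj p * z) ^ (n + 2)‖ ^ 2 =
      ‖deriv (diskAut c p) z‖ ^ (n + 2) := by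
  have hs : 0 ≤ 1 - ‖p‖ ^ 2 := (one_sub_sq_norm_pos hp).le
  have hexp : ((1 : ℝ) + (n : ℝ) / 2) * (2 : ℕ) = (n + 2 : ℕ) := by
    push_cast
    ring
  rw [norm_deriv_diskAut hc hp hz, norm_div, norm_real, norm_pow, Real.norm_of_nonneg
    (Real.rpow_nonneg hs _), div_pow, ← Real.rpow_mul_natCast hs, hexp, Real.rpow_natCast, div_pow,
    pow_right_comm]

end DiskAut

section Polydisk

variable {ι : Type*}

/-- The automorphism of the polydisk acting on the `j`-th coordinate by
`diskAut (c j) (p j)`. -/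
noncomputable def polydiskAut (c p : ι → ℂ) : (ι → ℂ) → ι → ℂ :=
  Pi.map fun j ↦ diskAut (c j) (p j)

variable [Fintype ι] {c p z : ι → ℂ}

theorem setOf_forall_norm_lt_one_eq_ball : {z : ι → ℂ | ∀ j, ‖z j‖ < 1} = ball 0 1 := by
  ext z
  simp [pi_norm_lt_iff]

theorem norm_apply_lt_one (hz : z ∈ ball 0 1) (j : ι) : ‖z j‖ < 1 :=
  (norm_le_pi_norm z j).trans_lt (mem_ball_zero_iff.mp hz)

theorem mapsTo_polydiskAut_ball (hc : ∀ j, ‖c j‖ = 1) (hp : ∀ j, ‖p j‖ < 1) :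
    MapsTo (polydiskAut c p) (ball 0 1) (ball 0 1) := fun _ hz ↦
  mem_ball_zero_iff.mpr <| (pi_norm_lt_iff one_pos).mpr fun j ↦
    norm_diskAut_lt_one (hc j) (hp j) (norm_apply_lt_one hz j)

theorem leftInvOn_polydiskAut_inv_mul (hc : ∀ j, ‖c j‖ = 1) (hp : ∀ j, ‖p j‖ < 1) :
    LeftInvOn (polydiskAut c⁻¹ (c * p)) (polydiskAut c p) (ball 0 1) := fun _ hz ↦
  funext fun j ↦ diskAut_inv_mul_diskAut (hc j) (hp j) (norm_apply_lt_one hz j)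

theorem bijOn_polydiskAut_ball (hc : ∀ j, ‖c j‖ = 1) (hp : ∀ j, ‖p j‖ < 1) :
    BijOn (polydiskAut c p) (ball 0 1) (ball 0 1) := by
  have hc' : ∀ j, ‖c⁻¹ j‖ = 1 := fun j ↦ by simp [hc j]
  have hp' : ∀ j, ‖(c * p) j‖ < 1 := fun j ↦ by simpa [hc j] using hp j
  have hcp : c⁻¹ * (c * p) = p :=
    funext fun j ↦ inv_mul_cancel_left₀ (norm_ne_zero_iff.mp (by simp [hc j])) (p j)
  have hright : LeftInvOn (polydiskAut c p) (polydiskAut c⁻¹ (c * p)) (ball 0 1) := by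
    simpa only [inv_inv, hcp] using leftInvOn_polydiskAut_inv_mul hc' hp'
  exact InvOn.bijOn ⟨leftInvOn_polydiskAut_inv_mul hc hp, hright⟩
    (mapsTo_polydiskAut_ball hc hp) (mapsTo_polydiskAut_ball hc' hp')

theorem lintegral_ball_eq_lintegral_comp_polydiskAut (μ : Measure (ι → ℂ)) [μ.IsAddHaarMeasure]
    (hc : ∀ j, ‖c j‖ = 1) (hp : ∀ j, ‖p j‖ < 1) (g : (ι → ℂ) → ℝ≥0∞) :
    ∫⁻ w in ball 0 1, g w ∂μ =
      ∫⁻ z in ball 0 1, ENNReal.ofReal (∏ j, ‖deriv (diskAut (c j) (p j)) (z j)‖ ^ 2) *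
        g (polydiskAut c p z) ∂μ := by
  have hbij := bijOn_polydiskAut_ball hc hp
  have hderiv : ∀ z ∈ ball (0 : ι → ℂ) 1, ∀ j,
      HasDerivAt (diskAut (c j) (p j)) (deriv (diskAut (c j) (p j)) (z j)) (z j) := fun z hz j ↦
    (hasDerivAt_diskAut (c j)
      (one_sub_conj_mul_ne_zero (hp j) (norm_apply_lt_one hz j))).differentiableAt.hasDerivAt
  conv_lhs => rw [← hbij.image_eq]
  exact lintegral_image_piMap_eq_lintegral_prod_sq_norm_deriv_mul measurableSet_ball hderiv
    hbij.injOn g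

/-- The density `∏ j, (1 + ℓ j) (1 - |z j|²) ^ ℓ j` of the weighted Bergman measure on the
polydisk. -/
noncomputable def bergmanWeight (ℓ : ι → ℕ) (z : ι → ℂ) : ℝ :=
  ∏ j, (1 + (ℓ j : ℝ)) * (1 - ‖z j‖ ^ 2) ^ ℓ j

theorem bergmanWeight_conj (ℓ : ι → ℕ) (z : ι → ℂ) :
    bergmanWeight ℓ (fun j ↦ conj (z j)) = bergmanWeight ℓ z := by
  simp only [bergmanWeight, RCLike.norm_conj]

theorem bergmanWeight_polydiskAut (ℓ : ι → ℕ) (hc : ∀ j, ‖c j‖ = 1) (hp : ∀ j, ‖p j‖ < 1)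
    (hz : z ∈ ball 0 1) :
    bergmanWeight ℓ (polydiskAut c p z) =
      (∏ j, ‖deriv (diskAut (c j) (p j)) (z j)‖ ^ ℓ j) * bergmanWeight ℓ z := by
  rw [bergmanWeight, bergmanWeight, ← Finset.prod_mul_distrib]
  refine Finset.prod_congr rfl fun j _ ↦ ?_
  rw [polydiskAut, Pi.map_apply,
    one_sub_sq_norm_diskAut (hc j) (hp j) (norm_apply_lt_one hz j), mul_pow, mul_left_comm]

theorem lintegral_bergmanWeight_comp_polydiskAut (μ : Measure (ι → ℂ)) [μ.IsAddHaarMeasure]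
    (ℓ : ι → ℕ) (hc : ∀ j, ‖c j‖ = 1) (hp : ∀ j, ‖p j‖ < 1) (g : (ι → ℂ) → ℝ≥0∞) :
    ∫⁻ z in ball 0 1,
        ENNReal.ofReal ((∏ j, ‖deriv (diskAut (c j) (p j)) (z j)‖ ^ (ℓ j + 2)) *
          bergmanWeight ℓ z) * g (polydiskAut c p z) ∂μ =
      ∫⁻ w in ball 0 1, ENNReal.ofReal (bergmanWeight ℓ w) * g w ∂μ := by
  rw [lintegral_ball_eq_lintegral_comp_polydiskAut μ hc hp fun w ↦
    ENNReal.ofReal (bergmanWeight ℓ w) * g w]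
  refine setLIntegral_congr_fun measurableSet_ball fun z hz ↦ ?_
  simp only [bergmanWeight_polydiskAut ℓ hc hp hz, pow_add, Finset.prod_mul_distrib]
  rw [← mul_assoc, ← ENNReal.ofReal_mul (by positivity)]
  congr 2
  ring

end Polydisk

section AreaMeasure

instance isAddHaarMeasure_dA : dA.IsAddHaarMeasure :=
  Measure.IsAddHaarMeasure.smul volume (by simp) (by simp [Real.pi_pos])

theorem measurePreserving_conj_dA : MeasurePreserving (conj : ℂ → ℂ) dA dA :=
  conjLIE.measurePreserving.smul_measure _

variable {ι : Type*} [Fintype ι]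

theorem lintegral_ball_comp_conj (g : (ι → ℂ) → ℝ≥0∞) :
    ∫⁻ z in ball 0 1, g (fun j ↦ conj (z j)) ∂(Measure.pi fun _ ↦ dA) =
      ∫⁻ z in ball 0 1, g z ∂(Measure.pi fun _ ↦ dA) := by
  let e : (ι → ℂ) ≃ᵐ (ι → ℂ) :=
    MeasurableEquiv.piCongrRight fun _ ↦ conjLIE.toHomeomorph.toMeasurableEquiv
  have he : MeasurePreserving e (Measure.pi fun _ ↦ dA) (Measure.pi fun _ ↦ dA) :=
    measurePreserving_pi _ _ fun _ ↦ measurePreserving_conj_dA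
  have he_apply z : e z = fun j ↦ conj (z j) := rfl
  have hball : e ⁻¹' ball 0 1 = ball 0 1 := by
    ext z
    simp [he_apply, pi_norm_lt_iff]
  simpa only [hball, he_apply] using
    he.setLIntegral_comp_preimage_emb e.measurableEmbedding g (ball 0 1)

theorem lintegral_sq_norm_comp_conj_polydiskAut {E : Type*} [SeminormedAddCommGroup E]
    {c p : ι → ℂ} (ℓ : ι → ℕ) (hc : ∀ j, ‖c j‖ = 1) (hp : ∀ j, ‖p j‖ < 1) (h : (ι → ℂ) → E) :
    ∫⁻ z in ball 0 1,
        ENNReal.ofReal ((∏ j, ‖deriv (diskAut (c j) (p j)) (z j)‖ ^ (ℓ j + 2)) *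
          ‖h fun j ↦ conj (polydiskAut c p z j)‖ ^ 2 * bergmanWeight ℓ z)
        ∂(Measure.pi fun _ ↦ dA) =
      ∫⁻ x in ball 0 1, ENNReal.ofReal (‖h x‖ ^ 2 * bergmanWeight ℓ x)
        ∂(Measure.pi fun _ ↦ dA) := by
  calc
    _ = ∫⁻ z in ball 0 1,
          ENNReal.ofReal ((∏ j, ‖deriv (diskAut (c j) (p j)) (z j)‖ ^ (ℓ j + 2)) *
            bergmanWeight ℓ z) * ENNReal.ofReal (‖h fun j ↦ conj (polydiskAut c p z j)‖ ^ 2)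
          ∂(Measure.pi fun _ ↦ dA) := by
      simp only [← ENNReal.ofReal_mul' (sq_nonneg _), mul_right_comm]
    _ = ∫⁻ w in ball 0 1, ENNReal.ofReal (bergmanWeight ℓ w) *
          ENNReal.ofReal (‖h fun j ↦ conj (w j)‖ ^ 2) ∂(Measure.pi fun _ ↦ dA) :=
      lintegral_bergmanWeight_comp_polydiskAut _ ℓ hc hp fun w ↦
        ENNReal.ofReal (‖h fun j ↦ conj (w j)‖ ^ 2)
    _ = ∫⁻ x in ball 0 1, ENNReal.ofReal (bergmanWeight ℓ x) * ENNReal.ofReal (‖h x‖ ^ 2)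
          ∂(Measure.pi fun _ ↦ dA) := by
      simpa only [bergmanWeight_conj] using lintegral_ball_comp_conj fun x : ι → ℂ ↦
        ENNReal.ofReal (bergmanWeight ℓ x) * ENNReal.ofReal (‖h x‖ ^ 2)
    _ = _ := by
      simp only [← ENNReal.ofReal_mul' (sq_nonneg _), mul_comm]

end AreaMeasure

theorem stmt_7_general {ι E : Type*} [Fintype ι] [DecidableEq ι] [SeminormedAddCommGroup E]
    (ℓ : ι → ℕ) (U : Finset ι) (p q : ι → ℂ)
    (hp : ∀ j ∈ U, p j ≠ 0 ∧ ‖p j‖ < 1) (hq : ∀ j ∉ U, ‖q j‖ = 1)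
    (ω : (ι → ℂ) → ι → ℂ)
    (hω : ∀ z j, ω z j =
      if j ∈ U then (conj (p j) / p j) * ((p j - z j) / (1 - conj (p j) * z j)) else q j * z j)
    (ϑ : (ι → ℂ) → ℂ)
    (hϑ : ∀ z, ϑ z = ∏ j ∈ U, (((1 - ‖p j‖ ^ 2) ^ ((1 : ℝ) + (ℓ j : ℝ) / 2) : ℝ) : ℂ) /
      (1 - conj (p j) * z j) ^ (ℓ j + 2))
    (h : (ι → ℂ) → E) :
    ∫⁻ z in ball 0 1, ENNReal.ofReal (‖ϑ z‖ ^ 2 * ‖h fun j ↦ conj (ω z j)‖ ^ 2 *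
        bergmanWeight ℓ z) ∂(Measure.pi fun _ ↦ dA) =
      ∫⁻ x in ball 0 1, ENNReal.ofReal (‖h x‖ ^ 2 * bergmanWeight ℓ x)
        ∂(Measure.pi fun _ ↦ dA) := by
  let c j := if j ∈ U then conj (p j) / p j else -q j
  let P j := if j ∈ U then p j else 0
  have hc j : ‖c j‖ = 1 := by
    by_cases hj : j ∈ U
    · simp [c, hj, (hp j hj).1]
    · simp [c, hj, hq j hj]
  have hP j : ‖P j‖ < 1 := by
    by_cases hj : j ∈ U
    · simp [P, hj, (hp j hj).2]
    · simp [P, hj]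
  have hω_eq : ω = polydiskAut c P := by
    ext z j
    by_cases hj : j ∈ U
    · simp [hω, polydiskAut, diskAut, c, P, hj]
    · simp [hω, polydiskAut, diskAut_neg_zero, c, P, hj]
  have hϑ_sq : ∀ z ∈ ball (0 : ι → ℂ) 1,
      ‖ϑ z‖ ^ 2 = ∏ j, ‖deriv (diskAut (c j) (P j)) (z j)‖ ^ (ℓ j + 2) := by
    intro z hz
    rw [hϑ, norm_prod, ← Finset.prod_pow, ← Finset.prod_subset (Finset.subset_univ U)]
    · refine Finset.prod_congr rfl fun j hj ↦ ?_
      rw [← sq_norm_rpow_div_pow_eq_norm_deriv_diskAut_pow (hc j) (hP j) (norm_apply_lt_one hz j)]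
      simp only [P, if_pos hj]
    · intro j _ hj
      rw [norm_deriv_diskAut (hc j) (hP j) (norm_apply_lt_one hz j)]
      simp [P, hj]
  rw [hω_eq, ← lintegral_sq_norm_comp_conj_polydiskAut ℓ hc hP]
  exact setLIntegral_congr_fun measurableSet_ball fun z hz ↦ by simp only [hϑ_sq z hz]

theorem stmt_7 (d : ℕ) (hd : 1 ≤ d) (ℓ : Fin d → ℕ)
    (U₁ U₂ : Finset (Fin d)) (hU : U₁ ∪ U₂ = Finset.univ) (hUdisj : U₁ ∩ U₂ = ∅)
    (p q : Fin d → ℂ)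
    (hp : ∀ j ∈ U₁, p j ≠ 0 ∧ ‖p j‖ < 1)
    (hq : ∀ j ∈ U₂, ‖q j‖ = 1)
    (ω : (Fin d → ℂ) → Fin d → ℂ)
    (hω : ∀ z : Fin d → ℂ, ∀ j : Fin d, ω z j =
      if j ∈ U₁ then (conj (p j) / p j) * ((p j - z j) / (1 - conj (p j) * z j))
      else q j * z j)
    (ϑ : (Fin d → ℂ) → ℂ)
    (hϑ : ∀ z : Fin d → ℂ, ϑ z =
      ∏ j ∈ U₁, (((1 - ‖p j‖ ^ 2) ^ ((1 : ℝ) + (ℓ j : ℝ) / 2) : ℝ) : ℂ) /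
        (1 - conj (p j) * z j) ^ (ℓ j + 2)) :
    ∀ h : (Fin d → ℂ) → ℂ,
      AnalyticOnNhd ℂ h {z : Fin d → ℂ | ∀ j, ‖z j‖ < 1} →
      (∫⁻ z in {z : Fin d → ℂ | ∀ j, ‖z j‖ < 1},
          ENNReal.ofReal (‖ϑ z‖ ^ 2 * ‖h (fun i => conj (ω z i))‖ ^ 2 *
            ∏ j, (1 + (ℓ j : ℝ)) * (1 - ‖z j‖ ^ 2) ^ ℓ j)
          ∂(Measure.pi fun _ => dA))
        = ∫⁻ x in {x : Fin d → ℂ | ∀ j, ‖x j‖ < 1},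
            ENNReal.ofReal (‖h x‖ ^ 2 * ∏ j, (1 + (ℓ j : ℝ)) * (1 - ‖x j‖ ^ 2) ^ ℓ j)
            ∂(Measure.pi fun _ => dA) := by
  have hq' : ∀ j ∉ U₁, ‖q j‖ = 1 := fun j hj ↦
    hq j ((Finset.mem_union.mp (hU ▸ Finset.mem_univ j)).resolve_left hj)
  rw [setOf_forall_norm_lt_one_eq_ball]
  exact fun h _ ↦ stmt_7_general ℓ U₁ p q hp hq' ω hω ϑ hϑ h
end

section
/- Let d ≥ 1 and ℓ ∈ ℤ_{≥0}^d. Let f : 𝔻^d → ℂ and g = (g₁,…,g_d) : 𝔻^d → 𝔻^d be analytic with g(0) = 0, and suppose that conj(f(z))·f(u)·K_{g(z)}(g(u)) = K_z(u) for all z, u ∈ 𝔻^d, where K_w(u) = ∏_{j=1}^d (1 − u_j·conj(w_j))^{−(ℓ_j+2)}. Then there exist c ∈ 𝕋, a₁,…,a_d ∈ 𝕋, and a bijection φ : {1,…,d} → {1,…,d} such that f(z) = c for all z ∈ 𝔻^d and g_κ(z) = a_κ·z_{φ(κ)} for every κ ∈ {1,…,d} and all z ∈ 𝔻^d. -/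
open Complex ComplexConjugate

/-!
Taking `z = 0` shows that `f` is a unimodular constant, so `g` preserves the kernel. Differentiating
`K_{g(z)}(g(u)) = K_z(u)` in `u` at `0` gives `⟨A v, g z⟩ = ⟨v, z⟩`, where `A = g'(0)` and
`⟨·, ·⟩` is the inner product weighted by the exponents; differentiating once more, in `z`, shows
that `A` is an isometry for this inner product, and comparing the two identities yields `g = A`.
Since `A` also maps the polydisk to itself, every row of its matrix has `ℓ¹` norm at most `1`, while
the isometry property gives a weighted `ℓ²` identity for the columns. Summing over all entries
forces each row to have a single nonzero entry.
-/

open Filter Metric Set Topology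

section MonomialMatrix

variable {ι E : Type*} [Fintype ι] [NormedAddCommGroup E]

theorem sum_norm_sq_le_one_of_sum_norm_le_one {v : ι → E} (hv : ∑ k, ‖v k‖ ≤ 1) :
    ∑ k, ‖v k‖ ^ 2 ≤ 1 :=
  (Finset.sum_sq_le_sq_sum_of_nonneg fun k _ ↦ norm_nonneg (v k)).trans <|
    pow_le_one₀ (Finset.sum_nonneg fun k _ ↦ norm_nonneg (v k)) hv

theorem exists_norm_eq_one_forall_ne_eq_zero {v : ι → E} (hv : ∑ k, ‖v k‖ ≤ 1)
    (hv_sq : 1 ≤ ∑ k, ‖v k‖ ^ 2) : ∃ i, ‖v i‖ = 1 ∧ ∀ k, k ≠ i → v k = 0 := by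
  classical
  have : Nonempty ι := by
    by_contra! h
    norm_num at hv_sq
  obtain ⟨i, hi⟩ := Finite.exists_max fun k ↦ ‖v k‖
  have hi_ge : 1 ≤ ‖v i‖ := calc
    1 ≤ ∑ k, ‖v k‖ ^ 2 := hv_sq
    _ ≤ ∑ k, ‖v i‖ * ‖v k‖ := by
      gcongr with k
      rw [sq]
      gcongr
      exact hi k
    _ = ‖v i‖ * ∑ k, ‖v k‖ := (Finset.mul_sum ..).symm
    _ ≤ ‖v i‖ := mul_le_of_le_one_right (norm_nonneg _) hv
  have hsplit := Finset.add_sum_erase Finset.univ (fun k ↦ ‖v k‖) (Finset.mem_univ i)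
  refine ⟨i, le_antisymm ?_ hi_ge, fun k hk ↦ norm_le_zero_iff.1 ?_⟩
  · exact (Finset.single_le_sum (fun k _ ↦ norm_nonneg (v k)) (Finset.mem_univ i)).trans hv
  · have hk_le := Finset.single_le_sum (f := fun k ↦ ‖v k‖) (fun k _ ↦ norm_nonneg (v k))
      (Finset.mem_erase.2 ⟨hk, Finset.mem_univ k⟩)
    linarith

theorem row_sum_norm_sq_eq_one {w : ι → ℝ} (hw : ∀ j, 0 < w j) {A : Matrix ι ι E}
    (hcol : ∀ k, ∑ j, w j * ‖A j k‖ ^ 2 = w k) (hrow : ∀ j, ∑ k, ‖A j k‖ ^ 2 ≤ 1) (j : ι) :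
    ∑ k, ‖A j k‖ ^ 2 = 1 := by
  have htotal : ∑ j, w j * ∑ k, ‖A j k‖ ^ 2 = ∑ j, w j := by
    simp_rw [Finset.mul_sum]
    rw [Finset.sum_comm]
    exact Finset.sum_congr rfl fun k _ ↦ hcol k
  have hle : ∀ j ∈ Finset.univ, w j * ∑ k, ‖A j k‖ ^ 2 ≤ w j := fun j _ ↦
    mul_le_of_le_one_right (hw j).le (hrow j)
  exact (mul_eq_left₀ (hw j).ne').1 <|
    (Finset.sum_eq_sum_iff_of_le hle).1 htotal j (Finset.mem_univ j)

theorem exists_perm_norm_eq_one_forall_ne_eq_zero {w : ι → ℝ} (hw : ∀ j, 0 < w j)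
    {A : Matrix ι ι E} (hcol : ∀ k, ∑ j, w j * ‖A j k‖ ^ 2 = w k)
    (hrow : ∀ j, ∑ k, ‖A j k‖ ≤ 1) :
    ∃ φ : Equiv.Perm ι, ∀ j, ‖A j (φ j)‖ = 1 ∧ ∀ k, k ≠ φ j → A j k = 0 := by
  have hrow_sq := row_sum_norm_sq_eq_one hw hcol fun j ↦
    sum_norm_sq_le_one_of_sum_norm_le_one (hrow j)
  choose φ hφ_norm hφ_zero using fun j ↦
    exists_norm_eq_one_forall_ne_eq_zero (hrow j) (hrow_sq j).ge
  have hφ_surj : Function.Surjective φ := by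
    intro k
    by_contra! hk
    have hcol_zero : ∑ j, w j * ‖A j k‖ ^ 2 = 0 :=
      Finset.sum_eq_zero fun j _ ↦ by simp [hφ_zero j k (hk j).symm]
    exact (hw k).ne' ((hcol k).symm.trans hcol_zero)
  exact ⟨.ofBijective φ (Finite.surjective_iff_bijective.1 hφ_surj),
    fun j ↦ ⟨hφ_norm j, hφ_zero j⟩⟩

end MonomialMatrix

section RCLike

variable {𝕜 ι : Type*} [RCLike 𝕜]

theorem norm_eq_one_and_eq_of_conj_mul_eq_one {X : Type*} {s : Set X} {f : X → 𝕜} {x₀ : X}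
    (hx₀ : x₀ ∈ s) (h : ∀ x ∈ s, conj (f x₀) * f x = 1) : ‖f x₀‖ = 1 ∧ ∀ x ∈ s, f x = f x₀ := by
  have hne : conj (f x₀) ≠ 0 := left_ne_zero_of_mul_eq_one (h x₀ hx₀)
  refine ⟨?_, fun x hx ↦ mul_left_cancel₀ hne ((h x hx).trans (h x₀ hx₀).symm)⟩
  have hsq : ‖f x₀‖ ^ 2 = 1 := by exact_mod_cast (RCLike.conj_mul (f x₀)).symm.trans (h x₀ hx₀)
  exact (pow_eq_one_iff_of_nonneg (norm_nonneg _) two_ne_zero).1 hsq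

theorem opNorm_le_one_of_mapsTo_ball {E F : Type*} [NormedAddCommGroup E] [NormedSpace 𝕜 E]
    [NormedAddCommGroup F] [NormedSpace 𝕜 F] {L : E →L[𝕜] F}
    (hL : MapsTo L (ball 0 1) (ball 0 1)) : ‖L‖ ≤ 1 := by
  let _ : NormedSpace ℝ E := NormedSpace.restrictScalars ℝ 𝕜 E
  have hL_closed : MapsTo L (closedBall 0 1) (closedBall 0 1) := by
    rw [← closure_ball (0 : E) one_ne_zero]
    exact (hL.closure L.continuous).mono_right closure_ball_subset_closedBall
  exact L.opNorm_le_of_unit_norm zero_le_one fun x hx ↦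
    mem_closedBall_zero_iff.1 (hL_closed (mem_closedBall_zero_iff.2 hx.le))

variable [Fintype ι]

theorem ball_zero_one_pi_eq_setOf : ball (0 : ι → 𝕜) 1 = {z | ∀ j, ‖z j‖ < 1} := by
  ext z
  simp [pi_norm_lt_iff]

open scoped Matrix.Norms.Operator in
theorem sum_norm_toMatrix'_le_opNorm {κ : Type*} [Fintype κ] [DecidableEq ι]
    (A : (ι → 𝕜) →L[𝕜] κ → 𝕜) (j : κ) :
    ∑ k, ‖LinearMap.toMatrix' A.toLinearMap j k‖ ≤ ‖A‖ := by
  set M := LinearMap.toMatrix' A.toLinearMap with hM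
  have hsup : ∑ k, ‖M j k‖₊ ≤ ‖M‖₊ := by
    rw [Matrix.linfty_opNNNorm_def]
    exact Finset.le_sup (f := fun j ↦ ∑ k, ‖M j k‖₊) (Finset.mem_univ j)
  calc
    ∑ k, ‖M j k‖ ≤ ‖M‖ := by simpa [← NNReal.coe_le_coe] using hsup
    _ = ‖A‖ := by
      rw [Matrix.linfty_opNorm_eq_opNorm]
      congr 1
      ext1 v
      simp [hM, LinearMap.toMatrix'_mulVec]

section WeightedPairing

/-- The linear functional `u ↦ ⟨u, v⟩ = ∑ j, w j * u j * conj (v j)`, i.e. the inner product on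
`𝕜 ^ ι` with weights `w`, with its second argument fixed. -/
noncomputable def weightedPairing (w : ι → ℝ) (v : ι → 𝕜) : (ι → 𝕜) →L[𝕜] 𝕜 :=
  ∑ j, ((w j : 𝕜) * conj (v j)) • ContinuousLinearMap.proj j

variable {w : ι → ℝ}

theorem weightedPairing_apply (w : ι → ℝ) (v u : ι → 𝕜) :
    weightedPairing w v u = ∑ j, (w j : 𝕜) * conj (v j) * u j := by
  simp [weightedPairing]

theorem conj_weightedPairing (w : ι → ℝ) (v u : ι → 𝕜) :
    conj (weightedPairing w v u) = weightedPairing w u v := by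
  simp [weightedPairing_apply, mul_comm, mul_left_comm]

theorem weightedPairing_sub (w : ι → ℝ) (v v' : ι → 𝕜) :
    weightedPairing w (v - v') = weightedPairing w v - weightedPairing w v' := by
  ext u
  simp [weightedPairing_apply, mul_sub, sub_mul]

theorem weightedPairing_self (w : ι → ℝ) (v : ι → 𝕜) :
    weightedPairing w v v = ((∑ j, w j * ‖v j‖ ^ 2 : ℝ) : 𝕜) := by
  simp [weightedPairing_apply, mul_assoc, RCLike.conj_mul]

theorem weightedPairing_self_eq_zero (hw : ∀ j, 0 < w j) {v : ι → 𝕜} :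
    weightedPairing w v v = 0 ↔ v = 0 := by
  have hnonneg : ∀ j ∈ Finset.univ, 0 ≤ w j * ‖v j‖ ^ 2 := fun j _ ↦
    mul_nonneg (hw j).le (sq_nonneg _)
  rw [weightedPairing_self, RCLike.ofReal_eq_zero, Finset.sum_eq_zero_iff_of_nonneg hnonneg]
  simp [(hw _).ne', funext_iff]

variable {A : (ι → 𝕜) →L[𝕜] ι → 𝕜}

theorem injective_of_weightedPairing_comp (hw : ∀ j, 0 < w j)
    (hA : ∀ v, weightedPairing w (A v) ∘L A = weightedPairing w v) : Function.Injective A := by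
  refine (injective_iff_map_eq_zero A).2 fun v hv ↦ (weightedPairing_self_eq_zero hw).1 ?_
  rw [← hA v, ContinuousLinearMap.comp_apply, hv, map_zero]

theorem eq_apply_of_weightedPairing_comp (hw : ∀ j, 0 < w j)
    (hA : ∀ v, weightedPairing w (A v) ∘L A = weightedPairing w v) {y z : ι → 𝕜}
    (hyz : weightedPairing w y ∘L A = weightedPairing w z) : y = A z := by
  have hsurj : Function.Surjective A :=
    LinearMap.injective_iff_surjective.1 (injective_of_weightedPairing_comp hw hA)
  obtain ⟨v, hv⟩ := hsurj (y - A z)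
  rw [← sub_eq_zero, ← weightedPairing_self_eq_zero hw, weightedPairing_sub]
  calc
    (weightedPairing w y - weightedPairing w (A z)) (y - A z)
      = (weightedPairing w y ∘L A - weightedPairing w (A z) ∘L A) v := by simp [hv]
    _ = 0 := by simp [hyz, hA]

theorem weightedPairing_comp_of_hasFDerivAt {g : (ι → 𝕜) → ι → 𝕜} (hg : HasFDerivAt g A 0)
    (h : ∀ᶠ z in 𝓝 0, weightedPairing w (g z) ∘L A = weightedPairing w z) (v : ι → 𝕜) :
    weightedPairing w (A v) ∘L A = weightedPairing w v := by
  have heq : weightedPairing w (A v) ∘ g =ᶠ[𝓝 0] weightedPairing w v := by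
    filter_upwards [h] with z hz
    rw [Function.comp_apply, ← conj_weightedPairing, ← conj_weightedPairing w z, ← hz,
      ContinuousLinearMap.comp_apply]
  exact ((weightedPairing w (A v)).hasFDerivAt.comp 0 hg).unique
    ((weightedPairing w v).hasFDerivAt.congr_of_eventuallyEq heq)

theorem sum_mul_norm_sq_toMatrix'_of_weightedPairing_comp [DecidableEq ι]
    (hA : ∀ v, weightedPairing w (A v) ∘L A = weightedPairing w v) (k : ι) :
    ∑ j, w j * ‖LinearMap.toMatrix' A.toLinearMap j k‖ ^ 2 = w k := by
  have h := DFunLike.congr_fun (hA (Pi.single k 1)) (Pi.single k 1)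
  rw [ContinuousLinearMap.comp_apply, weightedPairing_self, weightedPairing_self] at h
  simpa [LinearMap.toMatrix'_apply, Pi.single_apply, apply_ite] using RCLike.ofReal_injective h

theorem exists_perm_of_weightedPairing_comp (hw : ∀ j, 0 < w j)
    (hA : ∀ v, weightedPairing w (A v) ∘L A = weightedPairing w v) (hA_norm : ‖A‖ ≤ 1) :
    ∃ (a : ι → 𝕜) (φ : Equiv.Perm ι), (∀ κ, ‖a κ‖ = 1) ∧ ∀ z κ, A z κ = a κ * z (φ κ) := by
  classical
  obtain ⟨φ, hφ⟩ := exists_perm_norm_eq_one_forall_ne_eq_zero hw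
    (A := LinearMap.toMatrix' A.toLinearMap)
    (sum_mul_norm_sq_toMatrix'_of_weightedPairing_comp hA)
    fun j ↦ (sum_norm_toMatrix'_le_opNorm A j).trans hA_norm
  refine ⟨_, φ, fun κ ↦ (hφ κ).1, fun z κ ↦ ?_⟩
  calc
    A z κ = ∑ k, LinearMap.toMatrix' A.toLinearMap κ k * z k := by
      rw [← Matrix.mulVec_apply_eq_sum, LinearMap.toMatrix'_mulVec, ContinuousLinearMap.coe_coe]
    _ = LinearMap.toMatrix' A.toLinearMap κ (φ κ) * z (φ κ) :=
      Fintype.sum_eq_single (φ κ) fun k hk ↦ by rw [(hφ κ).2 k hk, zero_mul]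

end WeightedPairing

section PolydiskKernel

/-- The kernel `K_w(u) = ∏ j, (1 - u j * conj (w j)) ^ (-m j)` of the polydisk. It is the Bergman
kernel with weights `ℓ` for `m j = ℓ j + 2`, and the Szegő kernel for `m j = 1`. -/
noncomputable def polydiskKernel (m : ι → ℕ) (w u : ι → 𝕜) : 𝕜 :=
  ∏ j, ((1 - u j * conj (w j)) ^ m j)⁻¹

variable {m : ι → ℕ}

theorem polydiskKernel_zero_left (m : ι → ℕ) (u : ι → 𝕜) : polydiskKernel m 0 u = 1 := by
  simp [polydiskKernel]

theorem hasFDerivAt_polydiskKernel_zero (m : ι → ℕ) (w : ι → 𝕜) :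
    HasFDerivAt (polydiskKernel m w) (weightedPairing (fun j ↦ m j) w) 0 := by
  classical
  have hfactor : ∀ j ∈ Finset.univ, HasFDerivAt (fun u : ι → 𝕜 ↦ ((1 - u j * conj (w j)) ^ m j)⁻¹)
      (((m j : 𝕜) * conj (w j)) • ContinuousLinearMap.proj (R := 𝕜) (φ := fun _ : ι ↦ 𝕜) j) 0 := by
    intro j _
    have hscalar : HasDerivAt (fun t : 𝕜 ↦ ((1 - t * conj (w j)) ^ m j)⁻¹)
        ((m j : 𝕜) * conj (w j)) 0 := by
      simpa using ((((hasDerivAt_id (0 : 𝕜)).mul_const (conj (w j))).const_sub 1).fun_pow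
        (m j)).fun_inv (by simp)
    exact HasDerivAt.comp_hasFDerivAt (h₂ := fun t : 𝕜 ↦ ((1 - t * conj (w j)) ^ m j)⁻¹)
      (0 : ι → 𝕜) hscalar (hasFDerivAt_apply j 0)
  exact (HasFDerivAt.finsetProd hfactor).congr_fderiv (by simp [weightedPairing])

theorem weightedPairing_comp_of_polydiskKernel_eq {g : (ι → 𝕜) → ι → 𝕜}
    {A : (ι → 𝕜) →L[𝕜] ι → 𝕜} (hg : HasFDerivAt g A 0) (hg0 : g 0 = 0) {y z : ι → 𝕜}
    (h : ∀ᶠ u in 𝓝 0, polydiskKernel m y (g u) = polydiskKernel m z u) :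
    weightedPairing (fun j ↦ m j) y ∘L A = weightedPairing (fun j ↦ m j) z :=
  (HasFDerivAt.comp (g := polydiskKernel m y) 0
    (hg0.symm ▸ hasFDerivAt_polydiskKernel_zero m y) hg).unique
    ((hasFDerivAt_polydiskKernel_zero m z).congr_of_eventuallyEq h)

theorem exists_eqOn_continuousLinearMap_of_polydiskKernel_eq (hm : ∀ j, 0 < m j)
    {g : (ι → 𝕜) → ι → 𝕜} {s : Set (ι → 𝕜)} (hs : s ∈ 𝓝 0) (hg : DifferentiableAt 𝕜 g 0)
    (hg0 : g 0 = 0)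
    (h : ∀ z ∈ s, ∀ u ∈ s, polydiskKernel m (g z) (g u) = polydiskKernel m z u) :
    ∃ A : (ι → 𝕜) →L[𝕜] ι → 𝕜, EqOn g A s ∧
      ∀ v, weightedPairing (fun j ↦ m j) (A v) ∘L A = weightedPairing (fun j ↦ m j) v := by
  have hg' := hg.hasFDerivAt
  have hpair : ∀ z ∈ s, weightedPairing (fun j ↦ m j) (g z) ∘L fderiv 𝕜 g 0 =
      weightedPairing (fun j ↦ m j) z := fun z hz ↦
    weightedPairing_comp_of_polydiskKernel_eq hg' hg0 (eventually_of_mem hs (h z hz))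
  have hA := weightedPairing_comp_of_hasFDerivAt hg' (eventually_of_mem hs hpair)
  exact ⟨fderiv 𝕜 g 0, fun z hz ↦
    eq_apply_of_weightedPairing_comp (fun j ↦ Nat.cast_pos.2 (hm j)) hA (hpair z hz), hA⟩

theorem exists_perm_of_polydiskKernel_eq (hm : ∀ j, 0 < m j) {g : (ι → 𝕜) → ι → 𝕜}
    (hg : DifferentiableAt 𝕜 g 0) (hg_maps : MapsTo g (ball 0 1) (ball 0 1)) (hg0 : g 0 = 0)
    (h : ∀ z ∈ ball (0 : ι → 𝕜) 1, ∀ u ∈ ball (0 : ι → 𝕜) 1,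
      polydiskKernel m (g z) (g u) = polydiskKernel m z u) :
    ∃ (a : ι → 𝕜) (φ : Equiv.Perm ι), (∀ κ, ‖a κ‖ = 1) ∧
      ∀ z ∈ ball (0 : ι → 𝕜) 1, ∀ κ, g z κ = a κ * z (φ κ) := by
  obtain ⟨A, hgA, hA⟩ := exists_eqOn_continuousLinearMap_of_polydiskKernel_eq hm
    (ball_mem_nhds 0 one_pos) hg hg0 h
  obtain ⟨a, φ, ha, hA_eq⟩ := exists_perm_of_weightedPairing_comp
    (fun j ↦ Nat.cast_pos.2 (hm j)) hA (opNorm_le_one_of_mapsTo_ball (hg_maps.congr hgA))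
  exact ⟨a, φ, ha, fun z hz κ ↦ by rw [hgA hz, hA_eq]⟩

end PolydiskKernel

theorem stmt_14_general {m : ι → ℕ} (hm : ∀ j, 0 < m j) {f : (ι → 𝕜) → 𝕜} {g : (ι → 𝕜) → ι → 𝕜}
    (hg : DifferentiableAt 𝕜 g 0) (hg_maps : MapsTo g (ball 0 1) (ball 0 1)) (hg0 : g 0 = 0)
    (heq : ∀ z ∈ ball (0 : ι → 𝕜) 1, ∀ u ∈ ball (0 : ι → 𝕜) 1,
      conj (f z) * f u * polydiskKernel m (g z) (g u) = polydiskKernel m z u) :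
    ∃ (c : 𝕜) (a : ι → 𝕜) (φ : Equiv.Perm ι), ‖c‖ = 1 ∧ (∀ κ, ‖a κ‖ = 1) ∧
      (∀ z ∈ ball (0 : ι → 𝕜) 1, f z = c) ∧
      ∀ z ∈ ball (0 : ι → 𝕜) 1, ∀ κ, g z κ = a κ * z (φ κ) := by
  have h0 : (0 : ι → 𝕜) ∈ ball 0 1 := mem_ball_self one_pos
  have hf : ∀ u ∈ ball (0 : ι → 𝕜) 1, conj (f 0) * f u = 1 := fun u hu ↦ by
    simpa [hg0, polydiskKernel_zero_left] using heq 0 h0 u hu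
  obtain ⟨hf_norm, hf_const⟩ := norm_eq_one_and_eq_of_conj_mul_eq_one h0 hf
  have hkernel : ∀ z ∈ ball (0 : ι → 𝕜) 1, ∀ u ∈ ball (0 : ι → 𝕜) 1,
      polydiskKernel m (g z) (g u) = polydiskKernel m z u := fun z hz u hu ↦ by
    simpa [hf_const z hz, hf u hu] using heq z hz u hu
  obtain ⟨a, φ, ha, hg_eq⟩ := exists_perm_of_polydiskKernel_eq hm hg hg_maps hg0 hkernel
  exact ⟨f 0, a, φ, hf_norm, ha, hf_const, hg_eq⟩

end RCLike

theorem stmt_14 (d : ℕ) (hd : 1 ≤ d) (ℓ : Fin d → ℕ)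
    (f : (Fin d → ℂ) → ℂ) (g : (Fin d → ℂ) → Fin d → ℂ)
    (hf : AnalyticOnNhd ℂ f {z : Fin d → ℂ | ∀ j, ‖z j‖ < 1})
    (hg : AnalyticOnNhd ℂ g {z : Fin d → ℂ | ∀ j, ‖z j‖ < 1})
    (hgmap : ∀ z ∈ {z : Fin d → ℂ | ∀ j, ‖z j‖ < 1}, ∀ κ, ‖g z κ‖ < 1)
    (hg0 : g 0 = 0)
    (K : (Fin d → ℂ) → (Fin d → ℂ) → ℂ)
    (hK : ∀ w u : Fin d → ℂ, K w u = ∏ j, ((1 - u j * conj (w j)) ^ (ℓ j + 2))⁻¹)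
    (heq : ∀ z ∈ {z : Fin d → ℂ | ∀ j, ‖z j‖ < 1},
      ∀ u ∈ {u : Fin d → ℂ | ∀ j, ‖u j‖ < 1},
        conj (f z) * f u * K (g z) (g u) = K z u) :
    ∃ (c : ℂ) (a : Fin d → ℂ) (φ : Equiv.Perm (Fin d)),
      ‖c‖ = 1 ∧ (∀ κ, ‖a κ‖ = 1) ∧
      (∀ z ∈ {z : Fin d → ℂ | ∀ j, ‖z j‖ < 1}, f z = c) ∧
      (∀ z ∈ {z : Fin d → ℂ | ∀ j, ‖z j‖ < 1}, ∀ κ, g z κ = a κ * z (φ κ)) := by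
  obtain rfl : K = polydiskKernel fun j ↦ ℓ j + 2 := funext₂ hK
  have hg_maps : MapsTo g {z | ∀ j, ‖z j‖ < 1} {z | ∀ j, ‖z j‖ < 1} := hgmap
  rw [← ball_zero_one_pi_eq_setOf] at *
  exact stmt_14_general (fun j ↦ (ℓ j).succ.succ_pos)
    (hg 0 (mem_ball_self one_pos)).differentiableAt hg_maps hg0 heq
end
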